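/- arXiv:2204.03132 — 3 statements merged into one kernel-verified Lean document; each statement's English description precedes it below -/
import Mathlib

section
/- Suppose F : Z → ℝ^n is ℓ_F-Lipschitz and monotone ((z − z')ᵀ(F(z) − F(z')) ≥ 0 for all z, z' ∈ Z) and G : Z → ℝ is ℓ_G-smooth and convex, and set the AMP parameters α_k = 2/(k+1) and γ_k = k/(4ℓ_G + 3kℓ_F). Then for all k ≥ 2, max_{z∈Z} { G(z_k^{ag}) − G(z) + (z_k^{ag} − z)ᵀ F(z) } ≤ 16 ℓ_G D_Z² / (k(k−1)) + 12 ℓ_F D_Z² / (k−1). -/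
open scoped InnerProductSpace

noncomputable section

/-- `p = argmin_{z ∈ Z} γ ⟪z - w, u⟫ + ½ ‖z - w‖²`, i.e. `p` is the Euclidean projection
onto `Z` of `w - γ u`. -/
def IsArgminStep {E : Type*} [NormedAddCommGroup E] [InnerProductSpace ℝ E]
    (Z : Set E) (w : E) (γ : ℝ) (u : E) (p : E) : Prop :=
  p ∈ Z ∧ ∀ z ∈ Z, γ * ⟪p - w, u⟫_ℝ + ‖p - w‖ ^ 2 / 2 ≤ γ * ⟪z - w, u⟫_ℝ + ‖z - w‖ ^ 2 / 2

/-- The accelerated mirror-prox (AMP) iteration on `Z` for the operator `F` and the gradient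
`G'` of `G`, with parameters `a k` (the `α_k`) and `g k` (the `γ_k`), and iterates
`zmd k = z_k^{md}`, `z k = z_k`, `w k = w_k`, `zag k = z_k^{ag}` for `k ≥ 1`:
initialization `z 1 = z_1^{ag} = w 1 ∈ Z` and, for `k ≥ 1`,
`z_k^{md} = (1 - α_k) z_k^{ag} + α_k w_k`,
`z_{k+1} = argmin_{z ∈ Z} γ_k ⟪z - w_k, F(w_k) + ∇G(z_k^{md})⟫ + ½‖z - w_k‖²`,
`w_{k+1} = argmin_{z ∈ Z} γ_k ⟪z - w_k, F(z_{k+1}) + ∇G(z_k^{md})⟫ + ½‖z - w_k‖²`,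
`z_{k+1}^{ag} = (1 - α_k) z_k^{ag} + α_k z_{k+1}`. -/
def IsAMP {E : Type*} [NormedAddCommGroup E] [InnerProductSpace ℝ E]
    (Z : Set E) (F : E → E) (G' : E → E) (a g : ℕ → ℝ) (zmd z w zag : ℕ → E) : Prop :=
  z 1 = w 1 ∧ zag 1 = w 1 ∧ w 1 ∈ Z ∧
  ∀ k, 1 ≤ k →
    zmd k = (1 - a k) • zag k + a k • w k ∧
    IsArgminStep Z (w k) (g k) (F (w k) + G' (zmd k)) (z (k + 1)) ∧
    IsArgminStep Z (w k) (g k) (F (z (k + 1)) + G' (zmd k)) (w (k + 1)) ∧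
    zag (k + 1) = (1 - a k) • zag k + a k • z (k + 1)

section AMPLemmas

variable {E : Type*} [NormedAddCommGroup E] [InnerProductSpace ℝ E]

/-- First-order optimality of a prox step, in its three-point form. -/
lemma IsArgminStep.three_point {Z : Set E} (hZ : Convex ℝ Z) {w u p : E} {γ : ℝ}
    (h : IsArgminStep Z w γ u p) {y : E} (hy : y ∈ Z) :
    γ * ⟪p - y, u⟫_ℝ ≤ ‖w - y‖ ^ 2 / 2 - ‖p - y‖ ^ 2 / 2 - ‖w - p‖ ^ 2 / 2 := by
  obtain ⟨hp, hmin⟩ := h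
  have key : ∀ t : ℝ, 0 < t → t ≤ 1 →
      0 ≤ (γ * ⟪y - p, u⟫_ℝ + ⟪y - p, p - w⟫_ℝ) + t * (‖y - p‖ ^ 2 / 2) := by
    intro t ht ht1
    have hmem : p + t • (y - p) ∈ Z := hZ.add_smul_sub_mem hp hy ⟨ht.le, ht1⟩
    have h1 := hmin _ hmem
    have e : p + t • (y - p) - w = t • (y - p) + (p - w) := by abel
    rw [e, norm_add_sq_real, inner_add_left, real_inner_smul_left, real_inner_smul_left,
      norm_smul, mul_pow, Real.norm_eq_abs, sq_abs] at h1
    refine nonneg_of_mul_nonneg_right (a := t) ?_ ht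
    linarith
  have hlim : 0 ≤ γ * ⟪y - p, u⟫_ℝ + ⟪y - p, p - w⟫_ℝ := by
    refine le_of_forall_pos_le_add fun ε hε => ?_
    set b := ‖y - p‖ ^ 2 / 2 with hb
    have hb0 : 0 ≤ b := by positivity
    have ht : 0 < min 1 (ε / (b + 1)) := lt_min one_pos (by positivity)
    have h1 := key _ ht (min_le_left _ _)
    have h2 : min 1 (ε / (b + 1)) * b ≤ ε := by
      calc min 1 (ε / (b + 1)) * b ≤ ε / (b + 1) * (b + 1) := by
            gcongr
            · exact min_le_right _ _
            · linarith
        _ = ε := by field_simp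
    linarith
  have e1 : w - y = -((y - p) + (p - w)) := by abel
  have e2 : p - y = -(y - p) := by abel
  rw [e1, e2, norm_neg, norm_neg, norm_add_sq_real, inner_neg_left, norm_sub_rev w p]
  linarith

/-- The extragradient inequality for two consecutive prox steps from the same center. -/
lemma extragradient_step {Z : Set E} (hZ : Convex ℝ Z) {w u v p q : E} {γ L : ℝ} (hγ : 0 ≤ γ)
    (hp : IsArgminStep Z w γ u p) (hq : IsArgminStep Z w γ v q)
    (huv : ‖v - u‖ ≤ L * ‖p - w‖) {y : E} (hy : y ∈ Z) :
    γ * ⟪p - y, v⟫_ℝ ≤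
      (‖w - y‖ ^ 2 - ‖q - y‖ ^ 2) / 2 - (1 - γ ^ 2 * L ^ 2) / 2 * ‖p - w‖ ^ 2 := by
  have h1 := hp.three_point hZ hq.1
  have h2 := hq.three_point hZ hy
  have h3 : ⟪p - q, v - u⟫_ℝ ≤ ‖p - q‖ * (L * ‖p - w‖) :=
    (real_inner_le_norm _ _).trans (by gcongr)
  have h4 := mul_le_mul_of_nonneg_left h3 hγ
  have e : ⟪p - y, v⟫_ℝ = ⟪q - y, v⟫_ℝ + ⟪p - q, u⟫_ℝ + ⟪p - q, v - u⟫_ℝ := by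
    simp only [inner_sub_left, inner_sub_right]; ring
  rw [e]
  rw [norm_sub_rev w p] at h1
  nlinarith [sq_nonneg (‖p - q‖ - γ * L * ‖p - w‖)]

variable [CompleteSpace E]

lemma HasGradientAt.hasDerivAt_line {G : E → ℝ} {g x v : E} {t : ℝ}
    (h : HasGradientAt G g (x + t • v)) :
    HasDerivAt (fun s : ℝ => G (x + s • v)) ⟪g, v⟫_ℝ t := by
  have h1 : HasDerivAt (fun s : ℝ => x + s • v) v t := by
    simpa using ((hasDerivAt_id t).smul_const v).const_add x
  exact (h.hasFDerivAt.comp_hasDerivAt t h1).congr_deriv (by simp)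

/-- A convex function lies above its tangent at any point of differentiability. -/
lemma ConvexOn.add_inner_gradient_le {Z : Set E} {G : E → ℝ} (hG : ConvexOn ℝ Z G) {x y g : E}
    (hx : x ∈ Z) (hy : y ∈ Z) (hg : HasGradientAt G g x) :
    G x + ⟪g, y - x⟫_ℝ ≤ G y := by
  have hd : HasDerivAt (fun s : ℝ => G (x + s • (y - x))) ⟪g, y - x⟫_ℝ 0 :=
    HasGradientAt.hasDerivAt_line (by simpa using hg)
  have hc : ConvexOn ℝ (Set.Icc (0 : ℝ) 1) (fun s : ℝ => G (x + s • (y - x))) := by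
    refine ⟨convex_Icc 0 1, fun s hs t ht a b ha hb hab => ?_⟩
    have h := hG.2 (hG.1.add_smul_sub_mem hx hy hs) (hG.1.add_smul_sub_mem hx hy ht) ha hb hab
    have e : a • (x + s • (y - x)) + b • (x + t • (y - x))
        = x + (a • s + b • t) • (y - x) := by
      obtain rfl : b = 1 - a := by linarith
      simp only [smul_eq_mul]
      module
    rwa [e] at h
  have h := hc.le_slope_of_hasDerivAt (by simp) (by simp) zero_lt_one hd
  simp [slope_def_field] at h
  linarith

/-- The descent lemma for a function with Lipschitz gradient on a convex set. -/
lemma descent_lemma {Z : Set E} (hZ : Convex ℝ Z) {G : E → ℝ} {G' : E → E} {L : ℝ}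
    (hg : ∀ z ∈ Z, HasGradientAt G (G' z) z)
    (hL : ∀ z ∈ Z, ∀ z' ∈ Z, ‖G' z - G' z'‖ ≤ L * ‖z - z'‖) {x y : E}
    (hx : x ∈ Z) (hy : y ∈ Z) :
    G y ≤ G x + ⟪G' x, y - x⟫_ℝ + L / 2 * ‖y - x‖ ^ 2 := by
  set v := y - x with hv
  have hmem : ∀ t ∈ Set.Icc (0 : ℝ) 1, x + t • v ∈ Z :=
    fun t ht => hZ.add_smul_sub_mem hx hy ht
  have hd : ∀ t ∈ Set.Icc (0 : ℝ) 1,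
      HasDerivAt (fun s : ℝ => G (x + s • v)) ⟪G' (x + t • v), v⟫_ℝ t :=
    fun t ht => (hg _ (hmem t ht)).hasDerivAt_line
  have hB : ∀ t : ℝ, HasDerivAt
      (fun s : ℝ => G x + s * ⟪G' x, v⟫_ℝ + L / 2 * ‖v‖ ^ 2 * s ^ 2)
      (⟪G' x, v⟫_ℝ + L * t * ‖v‖ ^ 2) t := by
    intro t
    have h := (((hasDerivAt_id t).mul_const ⟪G' x, v⟫_ℝ).const_add (G x)).add
      ((hasDerivAt_pow 2 t).const_mul (L / 2 * ‖v‖ ^ 2))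
    refine h.congr_deriv ?_
    norm_num
    ring
  have key := image_le_of_deriv_right_le_deriv_boundary (a := 0) (b := 1)
    (fun t ht => (hd t ht).continuousAt.continuousWithinAt)
    (fun t ht => (hd t (Set.Ico_subset_Icc_self ht)).hasDerivWithinAt)
    (B := fun s : ℝ => G x + s * ⟪G' x, v⟫_ℝ + L / 2 * ‖v‖ ^ 2 * s ^ 2) (by simp)
    (fun t _ => (hB t).continuousAt.continuousWithinAt)
    (fun t _ => (hB t).hasDerivWithinAt) ?_ (Set.right_mem_Icc.2 zero_le_one)
  · simpa [hv] using key
  · intro t ht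
    have h1 := hL _ (hmem t (Set.Ico_subset_Icc_self ht)) x hx
    rw [add_sub_cancel_left, norm_smul, Real.norm_of_nonneg ht.1] at h1
    have h2 : ⟪G' (x + t • v) - G' x, v⟫_ℝ ≤ L * (t * ‖v‖) * ‖v‖ :=
      (real_inner_le_norm _ _).trans (by gcongr)
    rw [inner_sub_left] at h2
    linarith

/-- One iteration of accelerated mirror-prox decreases the gap function at `y`, up to a
telescoping term. -/
lemma amp_gap_step {Z : Set E} (hZ : Convex ℝ Z) {F G' : E → E} {G : E → ℝ} {ℓF ℓG : ℝ}
    (hFlip : ∀ z ∈ Z, ∀ z' ∈ Z, ‖F z - F z'‖ ≤ ℓF * ‖z - z'‖)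
    (hFmono : ∀ z ∈ Z, ∀ z' ∈ Z, (0 : ℝ) ≤ ⟪z - z', F z - F z'⟫_ℝ)
    (hGconv : ConvexOn ℝ Z G) (hGgrad : ∀ z ∈ Z, HasGradientAt G (G' z) z)
    (hGlip : ∀ z ∈ Z, ∀ z' ∈ Z, ‖G' z - G' z'‖ ≤ ℓG * ‖z - z'‖)
    {α γ : ℝ} (hα0 : 0 ≤ α) (hα1 : α ≤ 1) (hγ : 0 ≤ γ)
    (hstep : γ ^ 2 * ℓF ^ 2 + ℓG * α * γ ≤ 1)
    {x m w p q x' y : E} (hx : x ∈ Z) (hw : w ∈ Z) (hy : y ∈ Z)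
    (hm : m = (1 - α) • x + α • w)
    (hp : IsArgminStep Z w γ (F w + G' m) p) (hq : IsArgminStep Z w γ (F p + G' m) q)
    (hx' : x' = (1 - α) • x + α • p) :
    γ * (G x' - G y + ⟪x' - y, F y⟫_ℝ) ≤
      (1 - α) * (γ * (G x - G y + ⟪x - y, F y⟫_ℝ)) +
        α * ((‖w - y‖ ^ 2 - ‖q - y‖ ^ 2) / 2) := by
  have hmZ : m ∈ Z := hm ▸ hZ hx hw (by linarith) hα0 (by ring)
  have hxZ' : x' ∈ Z := hx' ▸ hZ hx hp.1 (by linarith) hα0 (by ring)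
  have hdesc := descent_lemma hZ hGgrad hGlip hmZ hxZ'
  have hcx := hGconv.add_inner_gradient_le hmZ hx (hGgrad m hmZ)
  have hcy := hGconv.add_inner_gradient_le hmZ hy (hGgrad m hmZ)
  have hlin : ⟪G' m, x' - m⟫_ℝ = (1 - α) * ⟪G' m, x - m⟫_ℝ +
      α * (⟪G' m, y - m⟫_ℝ + ⟪p - y, G' m⟫_ℝ) := by
    rw [real_inner_comm (G' m) (p - y), ← inner_add_right, ← real_inner_smul_right,
      ← real_inner_smul_right, ← inner_add_right, hx']
    congr 1
    module
  have hnorm : ‖x' - m‖ ^ 2 = α ^ 2 * ‖p - w‖ ^ 2 := by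
    have e : x' - m = α • (p - w) := by rw [hx', hm]; module
    rw [e, norm_smul, mul_pow, Real.norm_eq_abs, sq_abs]
  have hGstep : G x' ≤ (1 - α) * G x + α * (G y + ⟪p - y, G' m⟫_ℝ) +
      ℓG / 2 * (α ^ 2 * ‖p - w‖ ^ 2) := by
    rw [hlin, hnorm] at hdesc
    linarith [mul_le_mul_of_nonneg_left hcx (sub_nonneg.2 hα1),
      mul_le_mul_of_nonneg_left hcy hα0]
  have hFstep : ⟪x' - y, F y⟫_ℝ ≤ (1 - α) * ⟪x - y, F y⟫_ℝ + α * ⟪p - y, F p⟫_ℝ := by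
    have e : x' - y = (1 - α) • (x - y) + α • (p - y) := by rw [hx']; module
    have h := hFmono p hp.1 y hy
    rw [inner_sub_right, sub_nonneg] at h
    rw [e, inner_add_left, real_inner_smul_left, real_inner_smul_left]
    gcongr
  have hext := extragradient_step hZ hγ hp hq (L := ℓF)
    (by simpa using hFlip p hp.1 w hw) hy
  rw [inner_add_right] at hext
  have h1 := mul_le_mul_of_nonneg_left (add_le_add hGstep hFstep) hγ
  have h2 := mul_le_mul_of_nonneg_left hext hα0
  have h3 := mul_le_mul_of_nonneg_left hstep
    (mul_nonneg (half_pos one_pos).le (mul_nonneg hα0 (sq_nonneg ‖p - w‖)))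
  linarith

end AMPLemmas

/-- The stepsize condition for `α_k = 2/(k+1)` and `γ_k = k/(4ℓ_G + 3kℓ_F)`. -/
lemma amp_stepsize_le_one {k ℓF ℓG : ℝ} (hk : 0 ≤ k) (hℓF : 0 < ℓF) (hℓG : 0 < ℓG) :
    (k / (4 * ℓG + 3 * k * ℓF)) ^ 2 * ℓF ^ 2 +
      ℓG * (2 / (k + 1)) * (k / (4 * ℓG + 3 * k * ℓF)) ≤ 1 := by
  have hc : 0 < 4 * ℓG + 3 * k * ℓF := by positivity
  have hkF : 0 ≤ k * ℓF := by positivity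
  have h1 : (k / (4 * ℓG + 3 * k * ℓF)) ^ 2 * ℓF ^ 2 ≤ 1 / 2 := by
    rw [div_pow, div_mul_eq_mul_div, div_le_iff₀ (by positivity)]
    nlinarith [mul_nonneg hkF hℓG.le, sq_nonneg ℓG, sq_nonneg (k * ℓF)]
  have h2 : ℓG * (2 / (k + 1)) * (k / (4 * ℓG + 3 * k * ℓF)) ≤ 1 / 2 := by
    have e : ℓG * (2 / (k + 1)) * (k / (4 * ℓG + 3 * k * ℓF)) =
        2 * ℓG * k / ((k + 1) * (4 * ℓG + 3 * k * ℓF)) := by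
      field_simp
    rw [e, div_le_iff₀ (by positivity)]
    nlinarith [mul_nonneg hkF hk]
  linarith

/-- Theorem AMP-MT: convergence of AMP for monotone operators.
If `F` is `ℓ_F`-Lipschitz and monotone on `Z` and `G` is `ℓ_G`-smooth and convex on `Z`,
and the AMP parameters are `α_k = 2/(k+1)`, `γ_k = k/(4ℓ_G + 3kℓ_F)`, then for all `k ≥ 2`,
`max_{z ∈ Z} {G(z_k^{ag}) - G(z) + ⟪z_k^{ag} - z, F(z)⟫} ≤ 16 ℓ_G D_Z²/(k(k-1)) +
12 ℓ_F D_Z²/(k-1)`. -/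
theorem statement_3 {n : ℕ} (Z : Set (EuclideanSpace ℝ (Fin n)))
    (hZne : Z.Nonempty) (hZclosed : IsClosed Z) (hZconvex : Convex ℝ Z)
    (D ℓF ℓG : ℝ) (hℓF : 0 < ℓF) (hℓG : 0 < ℓG)
    (hD : ∀ z ∈ Z, ∀ z' ∈ Z, ‖z - z'‖ ≤ D)
    (F : EuclideanSpace ℝ (Fin n) → EuclideanSpace ℝ (Fin n))
    (hFlip : ∀ z ∈ Z, ∀ z' ∈ Z, ‖F z - F z'‖ ≤ ℓF * ‖z - z'‖)
    (hFmono : ∀ z ∈ Z, ∀ z' ∈ Z, (0:ℝ) ≤ ⟪z - z', F z - F z'⟫_ℝ)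
    (G : EuclideanSpace ℝ (Fin n) → ℝ) (G' : EuclideanSpace ℝ (Fin n) → EuclideanSpace ℝ (Fin n))
    (hGconv : ConvexOn ℝ Z G)
    (hGgrad : ∀ z ∈ Z, HasGradientAt G (G' z) z)
    (hGlip : ∀ z ∈ Z, ∀ z' ∈ Z, ‖G' z - G' z'‖ ≤ ℓG * ‖z - z'‖)
    (zmd z w zag : ℕ → EuclideanSpace ℝ (Fin n))
    (hAMP : IsAMP Z F G' (fun k => 2 / ((k : ℝ) + 1))
      (fun k => (k : ℝ) / (4 * ℓG + 3 * (k : ℝ) * ℓF)) zmd z w zag) :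
    ∀ k : ℕ, 2 ≤ k → ∀ y ∈ Z,
      G (zag k) - G y + ⟪zag k - y, F y⟫_ℝ ≤
        16 * ℓG * D ^ 2 / ((k : ℝ) * ((k : ℝ) - 1)) + 12 * ℓF * D ^ 2 / ((k : ℝ) - 1) := by
  obtain ⟨-, hzag1, hw1, hiter⟩ := hAMP
  have hw : ∀ k, w (k + 1) ∈ Z := by
    rintro (_ | k)
    · exact hw1
    · exact (hiter (k + 1) (by omega)).2.2.1.1
  have hzag : ∀ k, zag (k + 1) ∈ Z := by
    intro k
    induction k with
    | zero => exact hzag1 ▸ hw1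
    | succ k ih =>
      obtain ⟨-, hp, -, hx'⟩ := hiter (k + 1) (by omega)
      rw [hx']
      have hle : (2 : ℝ) / (((k + 1 : ℕ) : ℝ) + 1) ≤ 1 := by
        rw [div_le_one (by positivity)]
        push_cast
        linarith [(Nat.cast_nonneg k : (0 : ℝ) ≤ k)]
      exact hZconvex ih hp.1 (sub_nonneg.2 hle) (by positivity) (by ring)
  intro k hk y hy
  have hdist : ∀ k, ‖w (k + 1) - y‖ ^ 2 ≤ D ^ 2 := fun k =>
    pow_le_pow_left₀ (norm_nonneg _) (hD _ (hw k) y hy) 2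
  have hgap : ∀ k : ℕ, (k : ℝ) * (k + 1) * (G (zag (k + 1)) - G y + ⟪zag (k + 1) - y, F y⟫_ℝ) ≤
      (4 * ℓG + 3 * k * ℓF) * (D ^ 2 - ‖w (k + 1) - y‖ ^ 2) := by
    intro k
    induction k with
    | zero =>
      have h := mul_nonneg hℓG.le (sub_nonneg.2 (hdist 0))
      simp only [Nat.cast_zero]
      linarith
    | succ k ih =>
      obtain ⟨hm, hp, hq, hx'⟩ := hiter (k + 1) (by omega)
      have hk0 : (0 : ℝ) ≤ k := Nat.cast_nonneg k
      push_cast at hm hp hq hx' ⊢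
      set κ : ℝ := (k : ℝ) + 1 with hκ
      have hκ1 : 1 ≤ κ := by linarith
      have hc : 0 < 4 * ℓG + 3 * κ * ℓF := by positivity
      have hα1 : 2 / (κ + 1) ≤ 1 := by
        rw [div_le_one (by positivity)]
        linarith
      have hstep := amp_gap_step hZconvex hFlip hFmono hGconv hGgrad hGlip (by positivity) hα1
        (by positivity) (amp_stepsize_le_one (by positivity) hℓF hℓG) (hzag k) (hw k) hy
        hm hp hq hx'
      set Q' := G (zag (k + 1 + 1)) - G y + ⟪zag (k + 1 + 1) - y, F y⟫_ℝ
      set Q := G (zag (k + 1)) - G y + ⟪zag (k + 1) - y, F y⟫_ℝ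
      set c := 4 * ℓG + 3 * κ * ℓF with hcdef
      set d' := ‖w (k + 1 + 1) - y‖ ^ 2
      have hmul := mul_le_mul_of_nonneg_left hstep
        (mul_nonneg hc.le (by positivity : 0 ≤ κ + 1))
      have e1 : c * (κ + 1) * (κ / c * Q') = κ * (κ + 1) * Q' := by
        field_simp
      have e2 : c * (κ + 1) * ((1 - 2 / (κ + 1)) * (κ / c * Q) +
          2 / (κ + 1) * ((‖w (k + 1) - y‖ ^ 2 - d') / 2)) =
          (κ - 1) * κ * Q + c * (‖w (k + 1) - y‖ ^ 2 - d') := by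
        field_simp
        ring
      rw [e1, e2] at hmul
      have hκk : κ - 1 = k := by rw [hκ]; ring
      rw [hκk] at hmul
      have hd := mul_nonneg hℓF.le (sub_nonneg.2 (hdist k))
      have hcc : c = (4 * ℓG + 3 * k * ℓF) + 3 * ℓF := by rw [hcdef, hκ]; ring
      rw [hcc] at hmul ⊢
      linarith
  obtain ⟨j, rfl⟩ : ∃ j, k = j + 1 := ⟨k - 1, by omega⟩
  have hj : (1 : ℝ) ≤ j := by exact_mod_cast (by omega : 1 ≤ j)
  have hj0 : (0 : ℝ) < j := by linarith
  have h := hgap j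
  push_cast
  rw [add_sub_cancel_right]
  have e : 16 * ℓG * D ^ 2 / (((j : ℝ) + 1) * j) + 12 * ℓF * D ^ 2 / j =
      (16 * ℓG * D ^ 2 + 12 * ℓF * D ^ 2 * (j + 1)) / (j * (j + 1)) := by
    field_simp
  rw [e, le_div_iff₀ (by positivity)]
  have hcw : 0 ≤ (4 * ℓG + 3 * j * ℓF) * ‖w (j + 1) - y‖ ^ 2 := by positivity
  have hG0 : 0 ≤ ℓG * D ^ 2 := by positivity
  have hF0 : 0 ≤ ℓF * D ^ 2 := by positivity
  have hF1 : 0 ≤ j * (ℓF * D ^ 2) := by positivity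
  linarith
end
end

section
/- Suppose F : Z → ℝ^n is α-strongly monotone with α ≥ 0 ((z − z')ᵀ(F(z) − F(z')) ≥ α‖z − z'‖² for all z, z' ∈ Z) and G : Z → ℝ is ℓ_G-smooth and convex, and let the iterates (z_k^{md}, z_k, w_k, z_k^{ag}) be generated by the AMP iteration. Then for all z ∈ Z: Q(z_{k+1}^{ag}, z) − (1 − α_k) Q(z_k^{ag}, z) ≤ α_k (z_{k+1} − z)ᵀ(F(z_{k+1}) + ∇G(z_k^{md})) + (α_k² ℓ_G / 2)‖z_{k+1} − w_k‖² − α_k α ‖z_{k+1} − z‖². -/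
open scoped InnerProductSpace

noncomputable section

/-- The derivative of a function along the line `t ↦ x + t • d`. -/
theorem HasGradientAt.hasDerivAt_comp_line {E : Type*} [NormedAddCommGroup E]
    [InnerProductSpace ℝ E] [CompleteSpace E] {f : E → ℝ} {f' x d : E} {t : ℝ}
    (hf : HasGradientAt f f' (x + t • d)) :
    HasDerivAt (fun s : ℝ => f (x + s • d)) ⟪f', d⟫_ℝ t := by
  have hline : HasDerivAt (fun s : ℝ => x + s • d) d t := by
    simpa using ((hasDerivAt_id t).smul_const d).const_add x
  exact (hf.hasFDerivAt.comp_hasDerivAt t hline).congr_deriv (by simp)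

/-- A convex function lies above its tangent hyperplanes. -/
theorem ConvexOn.add_inner_gradient_le_s6 {E : Type*} [NormedAddCommGroup E]
    [InnerProductSpace ℝ E] [CompleteSpace E] {s : Set E} {f : E → ℝ} {f' x y : E}
    (hf : ConvexOn ℝ s f) (hx : x ∈ s) (hy : y ∈ s) (hf' : HasGradientAt f f' x) :
    f x + ⟪f', y - x⟫_ℝ ≤ f y := by
  have hconv := hf.comp_affineMap (AffineMap.lineMap (k := ℝ) x y)
  have hderiv : HasDerivAt (f ∘ AffineMap.lineMap (k := ℝ) x y) ⟪f', y - x⟫_ℝ 0 := by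
    have h : HasGradientAt f f' (x + (0 : ℝ) • (y - x)) := by simpa using hf'
    refine h.hasDerivAt_comp_line.congr_of_eventuallyEq (.of_forall fun t => ?_)
    simp [AffineMap.lineMap_apply, add_comm]
  have hslope := hconv.le_slope_of_hasDerivAt (by simpa using hx) (by simpa using hy)
    zero_lt_one hderiv
  simp only [slope_def_field, Function.comp_apply, AffineMap.lineMap_apply_one,
    AffineMap.lineMap_apply_zero, sub_zero, div_one] at hslope
  linarith

/-- The descent lemma: a function with `L`-Lipschitz gradient on a convex set lies below its
quadratic upper models. -/
theorem Convex.le_add_inner_gradient_add_sq {E : Type*} [NormedAddCommGroup E]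
    [InnerProductSpace ℝ E] [CompleteSpace E] {s : Set E} (hs : Convex ℝ s) {f : E → ℝ}
    {f' : E → E} {L : ℝ} (hf' : ∀ x ∈ s, HasGradientAt f (f' x) x)
    (hL : ∀ x ∈ s, ∀ y ∈ s, ‖f' x - f' y‖ ≤ L * ‖x - y‖) {x y : E} (hx : x ∈ s) (hy : y ∈ s) :
    f y ≤ f x + ⟪f' x, y - x⟫_ℝ + L / 2 * ‖y - x‖ ^ 2 := by
  have hmem : ∀ t ∈ Set.Icc (0 : ℝ) 1, x + t • (y - x) ∈ s := fun t ht =>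
    hs.add_smul_sub_mem hx hy ht
  have hderiv : ∀ t ∈ Set.Icc (0 : ℝ) 1, HasDerivAt (fun t : ℝ => f (x + t • (y - x)))
      ⟪f' (x + t • (y - x)), y - x⟫_ℝ t := fun t ht =>
    (hf' _ (hmem t ht)).hasDerivAt_comp_line
  have hmodel : ∀ t : ℝ, HasDerivAt
      (fun t : ℝ => f x + t * ⟪f' x, y - x⟫_ℝ + t ^ 2 * (L / 2 * ‖y - x‖ ^ 2))
      (⟪f' x, y - x⟫_ℝ + 2 * t * (L / 2 * ‖y - x‖ ^ 2)) t := fun t => by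
    exact ((((hasDerivAt_id t).mul_const ⟪f' x, y - x⟫_ℝ).const_add (f x)).add
      ((hasDerivAt_pow 2 t).mul_const (L / 2 * ‖y - x‖ ^ 2))).congr_deriv (by simp)
  have hle := image_le_of_deriv_right_le_deriv_boundary
    (fun t ht => (hderiv t ht).continuousAt.continuousWithinAt)
    (fun t ht => (hderiv t (Set.Ico_subset_Icc_self ht)).hasDerivWithinAt)
    (by simp) (fun t _ => (hmodel t).continuousAt.continuousWithinAt)
    (fun t _ => (hmodel t).hasDerivWithinAt)
    (fun t ht => ?_) (Set.right_mem_Icc.2 (zero_le_one' ℝ))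
  · simpa using hle
  · have hcs := real_inner_le_norm (f' (x + t • (y - x)) - f' x) (y - x)
    have hlip := hL _ (hmem t (Set.Ico_subset_Icc_self ht)) x hx
    rw [add_sub_cancel_left, norm_smul, Real.norm_of_nonneg ht.1] at hlip
    rw [inner_sub_left] at hcs
    nlinarith [mul_le_mul_of_nonneg_right hlip (norm_nonneg (y - x))]

/-- The points `w k` and `zag k` of the AMP iteration remain in the convex feasible set. -/
theorem IsAMP.mem {E : Type*} [NormedAddCommGroup E] [InnerProductSpace ℝ E] {Z : Set E}
    {F G' : E → E} {a g : ℕ → ℝ} {zmd z w zag : ℕ → E} (h : IsAMP Z F G' a g zmd z w zag)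
    (hZ : Convex ℝ Z) (ha : ∀ k, 1 ≤ k → 0 < a k ∧ a k < 1) {k : ℕ} (hk : 1 ≤ k) :
    w k ∈ Z ∧ zag k ∈ Z := by
  obtain ⟨-, hzag, hw, hstep⟩ := h
  induction k, hk using Nat.le_induction with
  | base => exact ⟨hw, hzag ▸ hw⟩
  | succ k hk ih =>
    obtain ⟨-, hz, hw', hzag'⟩ := hstep k hk
    obtain ⟨h0, h1⟩ := ha k hk
    exact ⟨hw'.1, hzag' ▸ hZ ih.2 hz.1 (by linarith) h0.le (by ring)⟩

/-- Lemma AMP-gap.  Suppose `F` is `α`-strongly monotone on `Z` with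
`α ≥ 0` and `G` is `ℓ_G`-smooth and convex on `Z`, and let the iterates be generated by the
AMP iteration with parameters `α_k ∈ (0,1)`, `γ_k > 0`.  Then, with the gap function
`Q(z̃, z) = G(z̃) - G(z) + ⟪z̃ - z, F(z)⟫`, for every `k ≥ 1` and every `z ∈ Z`:
`Q(z_{k+1}^{ag}, z) - (1 - α_k) Q(z_k^{ag}, z) ≤
  α_k ⟪z_{k+1} - z, F(z_{k+1}) + ∇G(z_k^{md})⟫ + (α_k² ℓ_G / 2)‖z_{k+1} - w_k‖²
  - α_k α ‖z_{k+1} - z‖²`. -/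
theorem statement_6 {n : ℕ} (Z : Set (EuclideanSpace ℝ (Fin n)))
    (hZne : Z.Nonempty) (hZclosed : IsClosed Z) (hZconvex : Convex ℝ Z)
    (ℓG α : ℝ) (hα : 0 ≤ α)
    (F : EuclideanSpace ℝ (Fin n) → EuclideanSpace ℝ (Fin n))
    (hFsmono : ∀ z ∈ Z, ∀ z' ∈ Z, α * ‖z - z'‖ ^ 2 ≤ ⟪z - z', F z - F z'⟫_ℝ)
    (G : EuclideanSpace ℝ (Fin n) → ℝ) (G' : EuclideanSpace ℝ (Fin n) → EuclideanSpace ℝ (Fin n))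
    (hGconv : ConvexOn ℝ Z G)
    (hGgrad : ∀ z ∈ Z, HasGradientAt G (G' z) z)
    (hGlip : ∀ z ∈ Z, ∀ z' ∈ Z, ‖G' z - G' z'‖ ≤ ℓG * ‖z - z'‖)
    (a g : ℕ → ℝ) (ha : ∀ k, 1 ≤ k → 0 < a k ∧ a k < 1) (hg : ∀ k, 1 ≤ k → 0 < g k)
    (zmd z w zag : ℕ → EuclideanSpace ℝ (Fin n))
    (hAMP : IsAMP Z F G' a g zmd z w zag) :
    ∀ k : ℕ, 1 ≤ k → ∀ y ∈ Z,
      (G (zag (k + 1)) - G y + ⟪zag (k + 1) - y, F y⟫_ℝ) -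
          (1 - a k) * (G (zag k) - G y + ⟪zag k - y, F y⟫_ℝ) ≤
        a k * ⟪z (k + 1) - y, F (z (k + 1)) + G' (zmd k)⟫_ℝ +
          a k ^ 2 * ℓG / 2 * ‖z (k + 1) - w k‖ ^ 2 - a k * α * ‖z (k + 1) - y‖ ^ 2 := by
  intro k hk y hy
  obtain ⟨hw, hzag⟩ := hAMP.mem hZconvex ha hk
  have hzag' := (hAMP.mem hZconvex ha (Nat.le_add_left 1 k)).2
  obtain ⟨hmd, ⟨hz, -⟩, -, hag⟩ := hAMP.2.2.2 k hk
  obtain ⟨h0, h1⟩ := ha k hk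
  have hmdZ : zmd k ∈ Z := hmd ▸ hZconvex hzag hw (by linarith) h0.le (by ring)
  have hdescent := hZconvex.le_add_inner_gradient_add_sq hGgrad hGlip hmdZ hzag'
  have hconv_ag := mul_le_mul_of_nonneg_left
    (hGconv.add_inner_gradient_le_s6 hmdZ hzag (hGgrad _ hmdZ)) (sub_nonneg.2 h1.le)
  have hconv_y := mul_le_mul_of_nonneg_left
    (hGconv.add_inner_gradient_le_s6 hmdZ hy (hGgrad _ hmdZ)) h0.le
  have hmono := mul_le_mul_of_nonneg_left (hFsmono _ hz y hy) h0.le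
  have hnorm : ‖zag (k + 1) - zmd k‖ ^ 2 = a k ^ 2 * ‖z (k + 1) - w k‖ ^ 2 := by
    have hsub : zag (k + 1) - zmd k = a k • (z (k + 1) - w k) := by
      rw [hag, hmd]; module
    rw [hsub, norm_smul, mul_pow, Real.norm_of_nonneg h0.le]
  have hinner_G : ⟪G' (zmd k), zag (k + 1) - zmd k⟫_ℝ =
      (1 - a k) * ⟪G' (zmd k), zag k - zmd k⟫_ℝ + a k * ⟪G' (zmd k), y - zmd k⟫_ℝ +
        a k * ⟪z (k + 1) - y, G' (zmd k)⟫_ℝ := by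
    rw [real_inner_comm (G' (zmd k)) (z (k + 1) - y), ← real_inner_smul_right,
      ← real_inner_smul_right, ← real_inner_smul_right, ← inner_add_right,
      ← inner_add_right, hag]
    congr 1
    module
  have hinner_F : ⟪zag (k + 1) - y, F y⟫_ℝ =
      (1 - a k) * ⟪zag k - y, F y⟫_ℝ + a k * ⟪z (k + 1) - y, F y⟫_ℝ := by
    rw [← real_inner_smul_left, ← real_inner_smul_left, ← inner_add_left, hag]
    congr 1
    module
  rw [hnorm, hinner_G] at hdescent
  rw [inner_sub_right] at hmono
  rw [hinner_F, inner_add_right]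
  linarith
end
end

section
/- Let A ∈ ℝ^{m×n}, E ∈ ℝ^{e×n} and b ∈ ℝ^n. Then exactly one of the following two systems has a solution: (i) there exists x ∈ ℝ^n with Ax ≤ 0 (componentwise), Ex = 0 and bᵀx > 0; (ii) there exist y ∈ ℝ^m with y ≥ 0 (componentwise) and z ∈ ℝ^e such that Aᵀy + Eᵀz − b = 0. -/
open Matrix

/-- **Farkas' lemma** for finitely many linear functionals on a vector space over an ordered field:
a functional that is nonpositive wherever all `a i`, `i ∈ s`, are nonpositive is a nonnegative
combination of these `a i`. -/
theorem exists_nonneg_eq_sum_smul_of_forall_nonpos {𝕜 V ι : Type*} [Field 𝕜] [LinearOrder 𝕜]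
    [IsStrictOrderedRing 𝕜] [AddCommGroup V] [Module 𝕜 V] (s : Finset ι) (a : ι → V →ₗ[𝕜] 𝕜)
    (b : V →ₗ[𝕜] 𝕜) (h : ∀ x, (∀ i ∈ s, a i x ≤ 0) → b x ≤ 0) :
    ∃ y : ι → 𝕜, (∀ i, 0 ≤ y i) ∧ b = ∑ i ∈ s, y i • a i := by
  classical
  induction s using Finset.induction_on generalizing a b with
  | empty =>
    refine ⟨0, fun _ => le_rfl, LinearMap.ext fun x => le_antisymm ?_ ?_⟩
    · simpa using h x
    · simpa using h (-x)
  | insert j s hj ih =>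
    have sum_update (y : ι → 𝕜) (c : 𝕜) :
        ∑ i ∈ insert j s, Function.update y j c i • a i = c • a j + ∑ i ∈ s, y i • a i := by
      rw [Finset.sum_insert hj, Function.update_self]
      congr 1
      refine Finset.sum_congr rfl fun i hi => ?_
      rw [Function.update_of_ne (ne_of_mem_of_not_mem hi hj)]
    have update_nonneg {y : ι → 𝕜} {c : 𝕜} (hy : ∀ i, 0 ≤ y i) (hc : 0 ≤ c) (i : ι) :
        0 ≤ Function.update y j c i := by
      by_cases hij : i = j
      · subst hij; simpa using hc
      · simpa [hij] using hy i
    by_cases hs : ∀ x, (∀ i ∈ s, a i x ≤ 0) → b x ≤ 0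
    · obtain ⟨y, hy, hb⟩ := ih a b hs
      exact ⟨Function.update y j 0, update_nonneg hy le_rfl, by rw [sum_update, ← hb]; simp⟩
    push Not at hs
    obtain ⟨u, hu, hbu⟩ := hs
    have hju : 0 < a j u := by
      by_contra! hle
      exact absurd (h u (by simpa [hle] using hu)) (not_le.mpr hbu)
    -- Project along `u` onto the kernel of `a j`.
    obtain ⟨y, hy, hb⟩ := ih (fun i => a i - (a i u / a j u) • a j) (b - (b u / a j u) • a j) <| by
      intro x hx
      have key (f : V →ₗ[𝕜] 𝕜) :
          (f - (f u / a j u) • a j) x = f (x - (a j x / a j u) • u) := by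
        simp only [LinearMap.sub_apply, LinearMap.smul_apply, smul_eq_mul, map_sub, map_smul]
        ring
      rw [key]
      refine h _ fun i hi => ?_
      rcases Finset.mem_insert.mp hi with rfl | hi
      · simp [hju.ne']
      · rw [← key]
        exact hx i hi
    refine ⟨Function.update y j (b u / a j u - ∑ i ∈ s, y i * (a i u / a j u)),
      update_nonneg hy ?_, ?_⟩
    · rw [sub_nonneg]
      refine (Finset.sum_nonpos fun i hi => ?_).trans (div_pos hbu hju).le
      exact mul_nonpos_of_nonneg_of_nonpos (hy i) (div_nonpos_of_nonpos_of_nonneg (hu i hi) hju.le)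
    · simp only [smul_sub, smul_smul, Finset.sum_sub_distrib, ← Finset.sum_smul] at hb
      rw [sum_update]
      ext x
      have hbx := LinearMap.congr_fun hb x
      simp only [LinearMap.sub_apply, LinearMap.add_apply, LinearMap.smul_apply,
        smul_eq_mul] at hbx ⊢
      linear_combination hbx

/-- a Farkas-type alternative.
For `A ∈ ℝ^{m×n}`, `E ∈ ℝ^{e×n}` and `b ∈ ℝ^n`, exactly one of the following two systems
has a solution: (i) `Ax ≤ 0`, `Ex = 0`, `bᵀx > 0`; (ii) `Aᵀy + Eᵀz - b = 0`, `y ≥ 0`. -/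
theorem statement_10 {m e n : ℕ} (A : Matrix (Fin m) (Fin n) ℝ)
    (E : Matrix (Fin e) (Fin n) ℝ) (b : Fin n → ℝ) :
    Xor' (∃ x : Fin n → ℝ, (∀ i, A.mulVec x i ≤ 0) ∧ E.mulVec x = 0 ∧ 0 < b ⬝ᵥ x)
      (∃ (y : Fin m → ℝ) (z : Fin e → ℝ), (∀ i, 0 ≤ y i) ∧
        Aᵀ.mulVec y + Eᵀ.mulVec z - b = 0) := by
  have dot_eq (y : Fin m → ℝ) (z : Fin e → ℝ) (x : Fin n → ℝ) :
      (Aᵀ.mulVec y + Eᵀ.mulVec z) ⬝ᵥ x = y ⬝ᵥ A.mulVec x + z ⬝ᵥ E.mulVec x := by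
    rw [add_dotProduct, mulVec_transpose, mulVec_transpose, dotProduct_mulVec, dotProduct_mulVec]
  refine xor_iff_iff_not.mpr ⟨?_, ?_⟩
  · rintro ⟨x, hA, hE, hb⟩ ⟨y, z, hy, hyz⟩
    rw [← sub_eq_zero.mp hyz, dot_eq, hE, dotProduct_zero, add_zero] at hb
    exact hb.not_ge (Finset.sum_nonpos fun i _ => mul_nonpos_of_nonneg_of_nonpos (hy i) (hA i))
  · contrapose!
    intro h
    let f (v : Fin n → ℝ) : (Fin n → ℝ) →ₗ[ℝ] ℝ := dotProductBilin ℝ ℝ v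
    obtain ⟨w, hw, hb⟩ := exists_nonneg_eq_sum_smul_of_forall_nonpos Finset.univ
      (Sum.elim (fun i => f (A i)) (Sum.elim (fun k => f (E k)) fun k => -f (E k))) (f b) <| by
        intro x hx
        refine h x (fun i => hx (.inl i) (Finset.mem_univ _)) (funext fun k => le_antisymm ?_ ?_)
        · exact hx (.inr (.inl k)) (Finset.mem_univ _)
        · exact neg_nonpos.mp (hx (.inr (.inr k)) (Finset.mem_univ _))
    refine ⟨fun i => w (.inl i), fun k => w (.inr (.inl k)) - w (.inr (.inr k)),
      fun i => hw _, sub_eq_zero.mpr (dotProduct_eq _ _ fun x => ?_)⟩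
    have hbx : b ⬝ᵥ x = _ := LinearMap.congr_fun hb x
    rw [dot_eq, hbx]
    simp [f, Fintype.sum_sum_type, dotProduct, mulVec, add_mul, sub_eq_add_neg,
      Finset.sum_add_distrib]
end
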